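/- arXiv:2503.00909 — 2 statements merged into one kernel-verified Lean document; each statement's English description precedes it below -/
import Mathlib

section
/- The function f : R^2 -> R defined by f(x,y) = 6 - 2 cos x - 2 cos y - 2 cos(x+y) has range exactly the interval [0,9]. -/
open SimpleGraph

noncomputable def hexSymbol : ℝ × ℝ → ℝ :=
  fun p => 6 - 2 * Real.cos p.1 - 2 * Real.cos p.2 - 2 * Real.cos (p.1 + p.2)
theorem stmt13 : Set.range hexSymbol = Set.Icc (0 : ℝ) 9 := by
  ext v
  constructor
  · rintro ⟨⟨x, y⟩, rfl⟩
    simp only [hexSymbol, Set.mem_Icc]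
    constructor
    · linarith [Real.cos_le_one x, Real.cos_le_one y, Real.cos_le_one (x + y)]
    · rw [Real.cos_add]
      nlinarith [sq_nonneg (1 + Real.cos x + Real.cos y), sq_nonneg (Real.sin x - Real.sin y),
        Real.sin_sq_add_cos_sq x, Real.sin_sq_add_cos_sq y]
  · rintro ⟨h0, h9⟩
    have hs : Real.sqrt (9 - v) ^ 2 = 9 - v := Real.sq_sqrt (by linarith)
    have hs0 := Real.sqrt_nonneg (9 - v)
    have hs3 : Real.sqrt (9 - v) ≤ 3 := by nlinarith
    have hc : Real.cos (Real.arccos ((Real.sqrt (9 - v) - 1) / 2)) = (Real.sqrt (9 - v) - 1) / 2 :=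
      Real.cos_arccos (by linarith) (by linarith)
    refine ⟨(Real.arccos ((Real.sqrt (9 - v) - 1) / 2),
      Real.arccos ((Real.sqrt (9 - v) - 1) / 2)), ?_⟩
    simp only [hexSymbol]
    rw [← two_mul, Real.cos_two_mul, hc]
    nlinarith
end

section
/- For the function f : R^2 -> R defined by f(x,y) = 6 - 2 cos x - 2 cos y - 2 cos(x+y), the set of critical values is exactly {0, 8, 9}: if the gradient of f vanishes at a point p then f(p) is 0, 8 or 9, and each of the values 0, 8, 9 is attained at some critical point. -/
open SimpleGraph

theorem hexSymbol_hasFDerivAt (p : ℝ × ℝ) : HasFDerivAt hexSymbol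
    ((2 * (Real.sin p.1 + Real.sin (p.1 + p.2))) • ContinuousLinearMap.fst ℝ ℝ ℝ +
     (2 * (Real.sin p.2 + Real.sin (p.1 + p.2))) • ContinuousLinearMap.snd ℝ ℝ ℝ) p := by
  have h1 : HasFDerivAt (fun q : ℝ × ℝ => q.1) (ContinuousLinearMap.fst ℝ ℝ ℝ) p := hasFDerivAt_fst
  have h2 : HasFDerivAt (fun q : ℝ × ℝ => q.2) (ContinuousLinearMap.snd ℝ ℝ ℝ) p := hasFDerivAt_snd
  have h := (((h1.cos.const_mul 2).const_sub 6).sub (h2.cos.const_mul 2)).sub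
    ((h1.add h2).cos.const_mul 2)
  refine HasFDerivAt.congr_fderiv h ?_
  ext <;> simp <;> ring

theorem hexSymbol_crit (p : ℝ × ℝ) : fderiv ℝ hexSymbol p = 0 ↔
    Real.sin p.1 + Real.sin (p.1 + p.2) = 0 ∧ Real.sin p.2 + Real.sin (p.1 + p.2) = 0 := by
  rw [(hexSymbol_hasFDerivAt p).fderiv]
  constructor
  · intro h
    have h1 := congrArg (fun L : ℝ × ℝ →L[ℝ] ℝ => L (1, 0)) h
    have h2 := congrArg (fun L : ℝ × ℝ →L[ℝ] ℝ => L (0, 1)) h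
    simp at h1 h2
    exact ⟨h1, h2⟩
  · rintro ⟨h1, h2⟩
    rw [h1, h2]
    simp

theorem stmt14 :
    (∀ p : ℝ × ℝ, fderiv ℝ hexSymbol p = 0 → hexSymbol p ∈ ({0, 8, 9} : Set ℝ)) ∧
    (∀ c ∈ ({0, 8, 9} : Set ℝ), ∃ p : ℝ × ℝ, fderiv ℝ hexSymbol p = 0 ∧ hexSymbol p = c) := by
  constructor
  · intro p hp
    obtain ⟨h1, h2⟩ := (hexSymbol_crit p).1 hp
    have e1 := Real.sin_sq_add_cos_sq p.1
    have e2 := Real.sin_sq_add_cos_sq p.2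
    simp only [hexSymbol, Set.mem_insert_iff, Set.mem_singleton_iff, Real.cos_add]
    rw [Real.sin_add] at h1 h2
    generalize Real.sin p.1 = s at *
    generalize Real.sin p.2 = t at *
    generalize Real.cos p.1 = a at *
    generalize Real.cos p.2 = b at *
    obtain rfl : s = t := by linarith
    have h3 : s * (1 + a + b) = 0 := by linarith
    have h4 : (a - b) * (a + b) = 0 := by linarith
    rcases mul_eq_zero.1 h3 with h | h
    · subst h
      have ha : (a - 1) * (a + 1) = 0 := by linarith
      have hb : (b - 1) * (b + 1) = 0 := by linarith
      rcases mul_eq_zero.1 ha with ha | ha <;> rcases mul_eq_zero.1 hb with hb | hb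
      · obtain rfl : a = 1 := by linarith
        obtain rfl : b = 1 := by linarith
        norm_num
      · obtain rfl : a = 1 := by linarith
        obtain rfl : b = -1 := by linarith
        norm_num
      · obtain rfl : a = -1 := by linarith
        obtain rfl : b = 1 := by linarith
        norm_num
      · obtain rfl : a = -1 := by linarith
        obtain rfl : b = -1 := by linarith
        norm_num
    · rcases mul_eq_zero.1 h4 with h5 | h5
      · obtain rfl : a = -1/2 := by linarith
        obtain rfl : b = -1/2 := by linarith
        right; right
        linarith
      · exfalso; linarith
  · intro c hc
    simp only [Set.mem_insert_iff, Set.mem_singleton_iff] at hc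
    rcases hc with rfl | rfl | rfl
    · refine ⟨(0, 0), (hexSymbol_crit _).2 (by simp), ?_⟩
      simp [hexSymbol]; norm_num
    · refine ⟨(Real.pi, 0), (hexSymbol_crit _).2 (by simp), ?_⟩
      simp [hexSymbol]; norm_num
    · have hc : Real.cos (Real.pi - Real.pi / 3) = -(1 / 2) := by
        rw [Real.cos_pi_sub, Real.cos_pi_div_three]
      have e := Real.sin_sq_add_cos_sq (Real.pi - Real.pi / 3)
      refine ⟨(Real.pi - Real.pi / 3, Real.pi - Real.pi / 3), (hexSymbol_crit _).2 ?_, ?_⟩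
      · simp only [Real.sin_add, hc]
        constructor <;> ring
      · simp only [hexSymbol, Real.cos_add, hc]
        rw [hc] at e
        linarith
end
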